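/- Let q ≥ 1 and let Q be the quiver of type Ã_{q,q} with vertex set {0,1,…,2q−1} and arrows i→i−1 for 1 ≤ i ≤ q, i→i+1 for q ≤ i ≤ 2q−2, and (2q−1)→0 (for q = 1 this is the Kronecker quiver with two arrows 1→0). Then there exists an element Y of ℚ(x_0,…,x_{2q−1}) such that for every vertex i of Q and every j ≥ 0 one has (Y² − 2)·X^i_{j+q} = X^i_j + X^i_{j+2q}. -/

import Mathlib

/-- Arrow multiplicities of the quiver of type Ã_{q,q} on vertices `{0,…,2q−1}` with arrows
`i → i−1` for `1 ≤ i ≤ q`, `i → i+1` for `q ≤ i ≤ 2q−2` and `(2q−1) → 0` (for `q = 1`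
this is the Kronecker quiver with two arrows `1 → 0`). -/
def multAqq (q : ℕ) (s t : Fin (q+q)) : ℕ :=
  (if 1 ≤ s.val ∧ s.val ≤ q ∧ t.val + 1 = s.val then 1 else 0) +
  (if q ≤ s.val ∧ s.val ≤ q + q - 2 ∧ t.val = s.val + 1 then 1 else 0) +
  (if s.val = q + q - 1 ∧ t.val = 0 then 1 else 0)

section Tiling

variable {K : Type*} [Field K] {t : ℤ → ℤ → K} {D : ℤ → ℤ → Prop}

/-- In a nowhere vanishing SL₂-tiling, the minors of two adjacent rows do not depend on
the rows. -/
theorem sl2Tiling_minor_succ (hDa : ∀ a b, D a b → D (a + 1) b) (hDb : ∀ a b, D a b → D a (b + 1))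
    (h0 : ∀ a b, D a b → t a b ≠ 0)
    (hsl : ∀ a b, D a b → t a b * t (a + 1) (b + 1) = 1 + t (a + 1) b * t a (b + 1))
    (n : ℕ) (a b : ℤ) (hD : D a b) :
    t a b * t (a + 1) (b + n) - t (a + 1) b * t a (b + n) =
      t (a + 1) b * t (a + 1 + 1) (b + n) - t (a + 1 + 1) b * t (a + 1) (b + n) := by
  have hDn : ∀ n : ℕ, D a (b + n) := by
    intro n
    induction n with
    | zero => simpa using hD
    | succ n ih => simpa [add_assoc] using hDb _ _ ih
  have hrec : ∀ n : ℕ, ∃ d, t a (b + n + 1 + 1) = d * t a (b + n + 1) - t a (b + n) ∧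
      t (a + 1) (b + n + 1 + 1) = d * t (a + 1) (b + n + 1) - t (a + 1) (b + n) ∧
      t (a + 1 + 1) (b + n + 1 + 1) = d * t (a + 1 + 1) (b + n + 1) - t (a + 1 + 1) (b + n) := by
    intro n
    have h := hDn n
    have e1 := hsl _ _ h
    have e2 := hsl _ _ (hDb _ _ h)
    have e3 := hsl _ _ (hDa _ _ h)
    have e4 := hsl _ _ (hDb _ _ (hDa _ _ h))
    have z := h0 _ _ (hDb _ _ (hDa _ _ h))
    refine ⟨(t (a + 1) (b + n) + t (a + 1) (b + n + 1 + 1)) / t (a + 1) (b + n + 1), ?_, ?_, ?_⟩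
    · field_simp
      linear_combination e1 - e2
    · field_simp
      ring
    · field_simp
      linear_combination e4 - e3
  suffices H : ∀ n : ℕ,
      (t a b * t (a + 1) (b + n) - t (a + 1) b * t a (b + n) =
        t (a + 1) b * t (a + 1 + 1) (b + n) - t (a + 1 + 1) b * t (a + 1) (b + n)) ∧
      (t a b * t (a + 1) (b + n + 1) - t (a + 1) b * t a (b + n + 1) =
        t (a + 1) b * t (a + 1 + 1) (b + n + 1) - t (a + 1 + 1) b * t (a + 1) (b + n + 1)) from
    (H n).1
  intro n
  induction n with
  | zero =>
    simp only [Nat.cast_zero, add_zero]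
    exact ⟨by ring, by linear_combination hsl _ _ hD - hsl _ _ (hDa _ _ hD)⟩
  | succ n ih =>
    obtain ⟨d, r1, r2, r3⟩ := hrec n
    simp only [Nat.cast_succ, ← add_assoc]
    refine ⟨ih.2, ?_⟩
    rw [r1, r2, r3]
    linear_combination d * ih.2 - ih.1

theorem sl2Tiling_minor_add (hDa : ∀ a b, D a b → D (a + 1) b) (hDb : ∀ a b, D a b → D a (b + 1))
    (h0 : ∀ a b, D a b → t a b ≠ 0)
    (hsl : ∀ a b, D a b → t a b * t (a + 1) (b + 1) = 1 + t (a + 1) b * t a (b + 1))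
    (n k : ℕ) (a b : ℤ) (hD : D a b) :
    t a b * t (a + 1) (b + n) - t (a + 1) b * t a (b + n) =
      t (a + k) b * t (a + k + 1) (b + n) - t (a + k + 1) b * t (a + k) (b + n) := by
  have hDk : ∀ k : ℕ, D (a + k) b := by
    intro k
    induction k with
    | zero => simpa using hD
    | succ k ih => simpa [add_assoc] using hDa _ _ ih
  induction k with
  | zero => simp
  | succ k ih =>
    rw [ih, sl2Tiling_minor_succ hDa hDb h0 hsl n _ b (hDk k)]
    simp only [Nat.cast_succ, ← add_assoc]

/-- A nowhere vanishing SL₂-tiling that is periodic in the antidiagonal direction satisfies a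
linear recurrence with constant coefficient along its rows. -/
theorem sl2Tiling_periodic_recurrence (hDa : ∀ a b, D a b → D (a + 1) b)
    (hDb : ∀ a b, D a b → D a (b + 1))
    (h0 : ∀ a b, D a b → t a b ≠ 0)
    (hsl : ∀ a b, D a b → t a b * t (a + 1) (b + 1) = 1 + t (a + 1) b * t a (b + 1))
    (q : ℕ) (hper : ∀ a b, t (a + q) b = t a (b + q)) (hD0 : D 0 0) :
    ∃ Y : K, ∀ a b, D a b → t a b + t (a + q + q) b = Y * t (a + q) b := by
  have hDak : ∀ a b, D a b → ∀ k : ℕ, D (a + k) b := by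
    intro a b h k
    induction k with
    | zero => simpa using h
    | succ k ih => simpa [add_assoc] using hDa _ _ ih
  let R : ℤ → ℤ → K := fun a b => (t a b + t (a + q + q) b) / t (a + q) b
  have hRa : ∀ a b, D a b → R (a + 1) b = R a b := by
    intro a b h
    have m := sl2Tiling_minor_add hDa hDb h0 hsl q q a b h
    rw [← hper, ← hper, ← hper, ← hper] at m
    have z1 := h0 _ _ (hDak _ _ h q)
    have z2 := h0 _ _ (hDak _ _ (hDa _ _ h) q)
    have c1 : a + 1 + (q : ℤ) = a + q + 1 := by ring
    have c2 : a + (q : ℤ) + 1 + q = a + q + q + 1 := by ring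
    simp only [R, c1, c2] at *
    rw [div_eq_div_iff z2 z1]
    linear_combination -m
  have hRb : ∀ a b, D a b → R a (b + 1) = R a b := by
    intro a b h
    have m := sl2Tiling_minor_add (t := fun a b => t b a) (D := fun a b => D b a)
      (fun a b h => hDb b a h) (fun a b h => hDa b a h) (fun a b h => h0 b a h)
      (fun a b h => by linear_combination hsl b a h) q q b a h
    have c1 : b + (q : ℤ) + 1 = b + 1 + q := by ring
    simp only [c1, ← hper] at m
    have z1 := h0 _ _ (hDak _ _ h q)
    have z2 := h0 _ _ (hDak _ _ (hDb _ _ h) q)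
    simp only [R]
    rw [div_eq_div_iff z2 z1]
    linear_combination -m
  have hR : ∀ a b, D a b → ∀ k l : ℕ, R (a + k) (b + l) = R a b := by
    intro a b h k l
    have h1 : R (a + k) b = R a b := by
      induction k with
      | zero => simp
      | succ k ih =>
        rw [← ih, ← hRa _ _ (hDak _ _ h k)]
        simp only [Nat.cast_succ, ← add_assoc]
    have h2 : D (a + k) (b + l) ∧ R (a + k) (b + l) = R (a + k) b := by
      induction l with
      | zero => simpa using hDak _ _ h k
      | succ l ih =>
        rw [← ih.2, ← hRb _ _ ih.1]
        simp only [Nat.cast_succ, ← add_assoc]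
        exact ⟨hDb _ _ ih.1, trivial⟩
    rw [h2.2, h1]
  refine ⟨R 0 0, fun a b h => ?_⟩
  have e1 := hR a b h (-a).toNat (-b).toNat
  have e2 := hR 0 0 hD0 a.toNat b.toNat
  have ca : a + ((-a).toNat : ℤ) = 0 + (a.toNat : ℤ) := by omega
  have cb : b + ((-b).toNat : ℤ) = 0 + (b.toNat : ℤ) := by omega
  rw [ca, cb, e2] at e1
  rw [e1]
  have z1 := h0 _ _ (hDak _ _ h q)
  simp only [R]
  field_simp

end Tiling

section Positivity

variable {σ : Type*}

/-- Fractions of polynomials whose numerator and denominator are positive at `(1,…,1)`. -/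
def PosAtOne (x : FractionRing (MvPolynomial σ ℚ)) : Prop :=
  ∃ p r : MvPolynomial σ ℚ, 0 < MvPolynomial.eval (fun _ => 1) p ∧
    0 < MvPolynomial.eval (fun _ => 1) r ∧
    x * algebraMap _ (FractionRing (MvPolynomial σ ℚ)) r = algebraMap _ _ p

theorem MvPolynomial.algebraMap_fractionRing_ne_zero_of_eval_pos {r : MvPolynomial σ ℚ}
    (hr : 0 < MvPolynomial.eval (fun _ => 1) r) :
    algebraMap _ (FractionRing (MvPolynomial σ ℚ)) r ≠ 0 := by
  intro h
  rw [FaithfulSMul.algebraMap_eq_zero_iff] at h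
  simp [h] at hr

namespace PosAtOne

variable {x y : FractionRing (MvPolynomial σ ℚ)}

theorem ne_zero (hx : PosAtOne x) : x ≠ 0 := by
  rintro rfl
  obtain ⟨p, r, hp, hr, h⟩ := hx
  rw [zero_mul] at h
  exact MvPolynomial.algebraMap_fractionRing_ne_zero_of_eval_pos hp h.symm

theorem one : PosAtOne (1 : FractionRing (MvPolynomial σ ℚ)) :=
  ⟨1, 1, by simp, by simp, by simp⟩

theorem mul (hx : PosAtOne x) (hy : PosAtOne y) : PosAtOne (x * y) := by
  obtain ⟨p, r, hp, hr, h⟩ := hx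
  obtain ⟨p', r', hp', hr', h'⟩ := hy
  refine ⟨p * p', r * r', by simp [hp, hp'], by simp [hr, hr'], ?_⟩
  rw [map_mul, map_mul, ← h, ← h']
  ring

theorem add (hx : PosAtOne x) (hy : PosAtOne y) : PosAtOne (x + y) := by
  obtain ⟨p, r, hp, hr, h⟩ := hx
  obtain ⟨p', r', hp', hr', h'⟩ := hy
  refine ⟨p * r' + p' * r, r * r', ?_, by simp [hr, hr'], ?_⟩
  · simp only [map_add, map_mul]
    positivity
  · rw [map_mul, map_add, map_mul, map_mul, ← h, ← h']
    ring

theorem of_mul_right (hxy : PosAtOne (x * y)) (hy : PosAtOne y) : PosAtOne x := by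
  obtain ⟨p, r, hp, hr, h⟩ := hxy
  obtain ⟨p', r', hp', hr', h'⟩ := hy
  refine ⟨p * r', r * p', by simp [hp, hr'], by simp [hr, hp'], ?_⟩
  rw [map_mul, map_mul, ← h, ← h']
  ring

theorem pow (hx : PosAtOne x) (n : ℕ) : PosAtOne (x ^ n) := by
  induction n with
  | zero => simpa using one
  | succ n ih => simpa [pow_succ] using ih.mul hx

theorem prod {ι : Type*} (s : Finset ι) (f : ι → FractionRing (MvPolynomial σ ℚ))
    (hf : ∀ i ∈ s, PosAtOne (f i)) : PosAtOne (∏ i ∈ s, f i) :=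
  Finset.prod_induction f PosAtOne (fun _ _ => mul) one hf

end PosAtOne

end Positivity

section Frieze

variable {q : ℕ}

theorem posAtOne_frieze
    {X : Fin (q+q) → ℕ → FractionRing (MvPolynomial (Fin (q+q)) ℚ)}
    (hX0 : ∀ v, X v 0 = algebraMap (MvPolynomial (Fin (q+q)) ℚ)
      (FractionRing (MvPolynomial (Fin (q+q)) ℚ)) (MvPolynomial.X v))
    (hXrec : ∀ v (j : ℕ), X v (j+1) * X v j =
      1 + (∏ s : Fin (q+q), X s (j+1) ^ multAqq q s v) *
          (∏ d : Fin (q+q), X d j ^ multAqq q v d)) (j : ℕ) :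
    ∀ v, PosAtOne (X v j) := by
  induction j with
  | zero => exact fun v => ⟨MvPolynomial.X v, 1, by simp, by simp, by simp [hX0]⟩
  | succ j ih =>
    suffices H : ∀ n : ℕ, ∀ v : Fin (q+q), ((v : ℤ) - q).natAbs = n → PosAtOne (X v (j + 1)) from
      fun v => H _ v rfl
    intro n
    induction n using Nat.strong_induction_on with
    | _ n ihn =>
      intro v hv
      refine PosAtOne.of_mul_right ?_ (ih v)
      rw [hXrec]
      refine PosAtOne.one.add (PosAtOne.mul (PosAtOne.prod _ _ fun s _ => ?_)
        (PosAtOne.prod _ _ fun d _ => (ih d).pow _))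
      by_cases hs : multAqq q s v = 0
      · simpa [hs] using PosAtOne.one
      · refine PosAtOne.pow (ihn _ ?_ s rfl) _
        have := s.isLt
        have := v.isLt
        unfold multAqq at hs
        split_ifs at hs <;> omega

/-- The vertex of the cyclic quiver below the vertex `i` of its universal cover. -/
def coverVertex (hq : 1 ≤ q) (i : ℤ) : Fin (q+q) :=
  ⟨(i % (q + q : ℤ)).toNat, by
    have := Int.emod_lt_of_pos i (b := (q + q : ℤ)) (by omega)
    have := Int.emod_nonneg i (b := (q + q : ℤ)) (by omega)
    omega⟩

/-- The depth at which the cover vertex `i` sits on the staircase of steps of length `q`. -/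
def coverDepth (q : ℕ) (i : ℤ) : ℤ := q * (i / (q + q : ℤ)) + min (i % (q + q : ℤ)) q

theorem coverVertex_add_period (hq : 1 ≤ q) (i : ℤ) :
    coverVertex hq (i + (q + q)) = coverVertex hq i := by
  simp [coverVertex]

theorem coverDepth_add_period (hq : 1 ≤ q) (i : ℤ) :
    coverDepth q (i + (q + q)) = coverDepth q i + q := by
  have : i + (q + q : ℤ) = i + (q + q) * 1 := by ring
  rw [coverDepth, coverDepth, this, Int.add_mul_ediv_left _ _ (by omega), Int.add_mul_emod_self_left]
  ring

theorem emod_nonneg_lt (hq : 1 ≤ q) (i : ℤ) :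
    0 ≤ i % (q + q : ℤ) ∧ i % (q + q : ℤ) < q + q :=
  ⟨Int.emod_nonneg i (by omega), Int.emod_lt_of_pos i (by omega)⟩

theorem coverVertex_val (hq : 1 ≤ q) (i : ℤ) :
    ((coverVertex hq i : ℕ) : ℤ) = i % (q + q : ℤ) :=
  Int.toNat_of_nonneg (emod_nonneg_lt hq i).1

theorem ediv_emod_add_one (hq : 1 ≤ q) (i : ℤ) :
    (i % (q + q : ℤ) + 1 < q + q ∧ (i + 1) % (q + q : ℤ) = i % (q + q : ℤ) + 1 ∧
      (i + 1) / (q + q : ℤ) = i / (q + q : ℤ)) ∨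
    (i % (q + q : ℤ) + 1 = q + q ∧ (i + 1) % (q + q : ℤ) = 0 ∧
      (i + 1) / (q + q : ℤ) = i / (q + q : ℤ) + 1) := by
  obtain ⟨h1, h2⟩ := emod_nonneg_lt hq i
  have h3 := Int.emod_add_mul_ediv i (q + q)
  rcases (show i % (q + q : ℤ) + 1 < q + q ∨ i % (q + q : ℤ) + 1 = q + q by omega) with h | h
  · left
    have := (Int.ediv_emod_unique (a := i + 1) (b := (q + q : ℤ)) (r := i % (q + q : ℤ) + 1)
      (q := i / (q + q : ℤ)) (by omega)).2 ⟨by linear_combination h3, by omega, h⟩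
    exact ⟨h, this.2, this.1⟩
  · right
    have := (Int.ediv_emod_unique (a := i + 1) (b := (q + q : ℤ)) (r := 0)
      (q := i / (q + q : ℤ) + 1) (by omega)).2
      ⟨by linear_combination h3 - h, by omega, by omega⟩
    exact ⟨h, this.2, this.1⟩

theorem coverDepth_add_one (hq : 1 ≤ q) (i : ℤ) :
    coverDepth q (i + 1) = coverDepth q i + if i % (q + q : ℤ) < q then 1 else 0 := by
  obtain ⟨h1, h2⟩ := emod_nonneg_lt hq i
  unfold coverDepth
  rcases ediv_emod_add_one hq i with ⟨h, e1, e2⟩ | ⟨h, e1, e2⟩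
  · rw [e1, e2]
    split_ifs <;> omega
  · rw [e1, e2, mul_add, if_neg (by omega)]
    omega

theorem coverDepth_sub_one (hq : 1 ≤ q) (i : ℤ) :
    coverDepth q (i - 1) =
      coverDepth q i - if 1 ≤ i % (q + q : ℤ) ∧ i % (q + q : ℤ) ≤ q then 1 else 0 := by
  have h := coverDepth_add_one hq (i - 1)
  obtain ⟨h1, h2⟩ := emod_nonneg_lt hq (i - 1)
  have h3 := ediv_emod_add_one hq (i - 1)
  rw [sub_add_cancel] at h h3
  rw [h]
  split_ifs <;> omega

theorem multAqq_coverVertex_right (hq : 1 ≤ q) (i : ℤ) (s : Fin (q+q)) :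
    multAqq q s (coverVertex hq i) =
      (if s = coverVertex hq (i + 1) then (if i % (q + q : ℤ) < q then 1 else 0) else 0) +
      (if s = coverVertex hq (i - 1) then
        (if 1 ≤ i % (q + q : ℤ) ∧ i % (q + q : ℤ) ≤ q then 0 else 1) else 0) := by
  have hs := s.isLt
  obtain ⟨h1, h2⟩ := emod_nonneg_lt hq (i - 1)
  have h3 := ediv_emod_add_one hq (i - 1)
  have h4 := ediv_emod_add_one hq i
  rw [sub_add_cancel] at h3
  have v1 := coverVertex_val hq i
  have v2 := coverVertex_val hq (i + 1)
  have v3 := coverVertex_val hq (i - 1)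
  unfold multAqq
  split_ifs <;> simp only [Fin.ext_iff] at * <;> omega

theorem multAqq_coverVertex_left (hq : 1 ≤ q) (i : ℤ) (d : Fin (q+q)) :
    multAqq q (coverVertex hq i) d =
      (if d = coverVertex hq (i + 1) then (if i % (q + q : ℤ) < q then 0 else 1) else 0) +
      (if d = coverVertex hq (i - 1) then
        (if 1 ≤ i % (q + q : ℤ) ∧ i % (q + q : ℤ) ≤ q then 1 else 0) else 0) := by
  have hd := d.isLt
  obtain ⟨h1, h2⟩ := emod_nonneg_lt hq (i - 1)
  have h3 := ediv_emod_add_one hq (i - 1)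
  have h4 := ediv_emod_add_one hq i
  rw [sub_add_cancel] at h3
  have v1 := coverVertex_val hq i
  have v2 := coverVertex_val hq (i + 1)
  have v3 := coverVertex_val hq (i - 1)
  unfold multAqq
  split_ifs <;> simp only [Fin.ext_iff] at * <;> omega

theorem prod_pow_ite_add_ite {ι M : Type*} [Fintype ι] [DecidableEq ι] [CommMonoid M]
    (f : ι → M) (u v : ι) (m n : ℕ) :
    ∏ s, f s ^ ((if s = u then m else 0) + (if s = v then n else 0)) = f u ^ m * f v ^ n := by
  simp only [pow_add, Finset.prod_mul_distrib, pow_ite, pow_zero]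
  simp

theorem frieze_cover_mul {K : Type*} [Field K] {X : Fin (q+q) → ℕ → K}
    (hXrec : ∀ v (j : ℕ), X v (j+1) * X v j =
      1 + (∏ s : Fin (q+q), X s (j+1) ^ multAqq q s v) *
          (∏ d : Fin (q+q), X d j ^ multAqq q v d))
    (hq : 1 ≤ q) (i : ℤ) (j : ℕ) :
    X (coverVertex hq i) j * X (coverVertex hq i) (j + 1) =
      1 + X (coverVertex hq (i - 1)) (j + 1 + coverDepth q (i - 1) - coverDepth q i).toNat *
        X (coverVertex hq (i + 1)) (j + coverDepth q (i + 1) - coverDepth q i).toNat := by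
  rw [mul_comm, hXrec]
  simp only [multAqq_coverVertex_left, multAqq_coverVertex_right, prod_pow_ite_add_ite]
  have e1 : (j + 1 + coverDepth q (i - 1) - coverDepth q i).toNat =
      if 1 ≤ i % (q + q : ℤ) ∧ i % (q + q : ℤ) ≤ q then j else j + 1 := by
    rw [coverDepth_sub_one hq]
    split_ifs <;> omega
  have e2 : (j + coverDepth q (i + 1) - coverDepth q i).toNat =
      if i % (q + q : ℤ) < q then j + 1 else j := by
    rw [coverDepth_add_one hq]
    split_ifs <;> omega
  rw [e1, e2]
  split_ifs <;> ring

end Frieze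

/-- for `q ≥ 1` and the above quiver of type Ã_{q,q}, there is an element
`Y` of `ℚ(x_0,…,x_{2q−1})` such that for every vertex `i` and every `j ≥ 0` one has
`(Y² − 2)·X^i_{j+q} = X^i_j + X^i_{j+2q}`. -/
theorem stmt_18 (q : ℕ) (hq : 1 ≤ q)
    (X : Fin (q+q) → ℕ → FractionRing (MvPolynomial (Fin (q+q)) ℚ))
    (hX0 : ∀ v, X v 0 = algebraMap (MvPolynomial (Fin (q+q)) ℚ)
      (FractionRing (MvPolynomial (Fin (q+q)) ℚ)) (MvPolynomial.X v))
    (hXrec : ∀ v (j : ℕ), X v (j+1) * X v j =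
      1 + (∏ s : Fin (q+q), X s (j+1) ^ multAqq q s v) *
          (∏ d : Fin (q+q), X d j ^ multAqq q v d)) :
    ∃ Y : FractionRing (MvPolynomial (Fin (q+q)) ℚ),
      ∀ (i : Fin (q+q)) (j : ℕ),
        (Y ^ 2 - 2) * X i (j + q) = X i j + X i (j + 2 * q) := by
  let t : ℤ → ℤ → FractionRing (MvPolynomial (Fin (q+q)) ℚ) := fun a b =>
    X (coverVertex hq (b - a)) (a + coverDepth q (b - a)).toNat
  let D : ℤ → ℤ → Prop := fun a b => 0 ≤ a + coverDepth q (b - a)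
  have hper : ∀ a b, t (a + q) b = t a (b + q) := by
    intro a b
    have c : b + q - a = b - (a + q) + (q + q) := by ring
    simp only [t]
    rw [c, coverVertex_add_period, coverDepth_add_period hq]
    congr 2
    ring
  have hDa : ∀ a b, D a b → D (a + 1) b := by
    intro a b h
    have := coverDepth_sub_one hq (b - a)
    simp only [D] at h ⊢
    rw [← sub_sub, this]
    split_ifs <;> omega
  obtain ⟨Y, hY⟩ := sl2Tiling_periodic_recurrence (t := t) (D := D)
    hDa
    (fun a b h => by
      have := coverDepth_add_one hq (b - a)
      simp only [D] at h ⊢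
      rw [add_sub_right_comm, this]
      split_ifs <;> omega)
    (fun a b _ => (posAtOne_frieze hX0 hXrec _ _).ne_zero)
    (fun a b h => by
      have := frieze_cover_mul hXrec hq (b - a) (a + coverDepth q (b - a)).toNat
      simp only [D] at h
      simp only [t]
      rw [Int.toNat_of_nonneg h] at this
      rw [show b + 1 - (a + 1) = b - a by ring, show b - (a + 1) = b - a - 1 by ring,
        show b + 1 - a = b - a + 1 by ring,
        show (a + 1 + coverDepth q (b - a)).toNat = (a + coverDepth q (b - a)).toNat + 1 by omega,
        this]
      congr 4 <;> ring)
    q hper (by simp [D, coverDepth])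
  refine ⟨Y, fun i j => ?_⟩
  have hi := i.isLt
  have him : ((i : ℕ) : ℤ) % (q + q : ℤ) = i := Int.emod_eq_of_lt (by omega) (by omega)
  have hver : coverVertex hq i = i := by
    ext
    simp [coverVertex, him]
  set a : ℤ := j - coverDepth q i with ha
  have hX : ∀ k : ℕ, t (a + k) (a + k + i) = X i (j + k) := by
    intro k
    simp only [t, add_sub_cancel_left, hver]
    congr 1
    omega
  have hDak : ∀ k : ℕ, D (a + k) (a + i) := by
    intro k
    induction k with
    | zero => simp [D, ha]
    | succ k ih => simpa [add_assoc] using hDa _ _ ih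
  have r0 := hY _ _ (hDak 0)
  have r1 := hY _ _ (hDak q)
  have r2 := hY _ _ (hDak (q + q))
  have x0 := hX 0
  have x1 := hX q
  have x2 := hX (q + q)
  simp only [Nat.cast_add, Nat.cast_zero, add_zero, ← add_assoc] at r0 r1 r2 x0 x1 x2
  rw [show a + q + (i : ℤ) = a + i + q by ring, ← hper] at x1
  rw [show a + q + q + (i : ℤ) = a + i + q + q by ring, ← hper, ← hper] at x2
  rw [two_mul, ← add_assoc, ← x0, ← x1, ← x2]
  linear_combination -r0 - r2 - Y * r1
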